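/- Let 𝒜 be a hereditary abelian category. A full subcategory 𝒩 ⊆ 𝒜 is a narrow subcategory if and only if 𝒩 is a tilting nullity class in its wide closure wide(𝒩), i.e. 𝒩 is closed under quotient objects and extensions inside the abelian category wide(𝒩), and every object of wide(𝒩) admits a monomorphism into an object of 𝒩. -/

import Mathlib

/-!
STATEMENT 5: Let 𝒜 be a hereditary abelian category.  A (replete) full subcategory 𝒩 ⊆ 𝒜 is
narrow (closed under extensions and cokernels) if and only if 𝒩 is a tilting nullity class
in its wide closure wide(𝒩), i.e.:
* 𝒩 is closed under quotient objects inside wide(𝒩),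
* 𝒩 is closed under extensions inside wide(𝒩), and
* every object of wide(𝒩) admits a monomorphism into an object of 𝒩.
-/

open CategoryTheory CategoryTheory.Limits

universe w v u

variable {𝒜 : Type u} [Category.{v} 𝒜] [Abelian 𝒜]

/-- A subcategory (given by its set of objects) is replete, i.e. closed under isomorphisms. -/
def Replete (N : Set 𝒜) : Prop := ∀ ⦃X Y : 𝒜⦄, X ∈ N → (X ≅ Y) → Y ∈ N

/-- A subcategory is closed under extensions if for every short exact sequence
`0 → X₁ → X₂ → X₃ → 0` with `X₁` and `X₃` in it, `X₂` is in it. -/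
def ClosedUnderExtensions (N : Set 𝒜) : Prop :=
  ∀ S : ShortComplex 𝒜, S.ShortExact → S.X₁ ∈ N → S.X₃ ∈ N → S.X₂ ∈ N

/-- A subcategory is closed under cokernels if the cokernel of any map between its objects
belongs to it. -/
def ClosedUnderCokernels (N : Set 𝒜) : Prop :=
  ∀ ⦃X Y : 𝒜⦄ (f : X ⟶ Y), X ∈ N → Y ∈ N → cokernel f ∈ N

/-- A subcategory is closed under kernels if the kernel of any map between its objects
belongs to it. -/
def ClosedUnderKernels (N : Set 𝒜) : Prop :=
  ∀ ⦃X Y : 𝒜⦄ (f : X ⟶ Y), X ∈ N → Y ∈ N → kernel f ∈ N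

/-- A narrow subcategory: a (replete) full subcategory closed under extensions and cokernels. -/
def IsNarrow (N : Set 𝒜) : Prop :=
  Replete N ∧ ClosedUnderExtensions N ∧ ClosedUnderCokernels N

/-- A wide subcategory: a (replete) full subcategory closed under kernels, cokernels and
extensions. -/
def IsWide (W : Set 𝒜) : Prop :=
  Replete W ∧ ClosedUnderKernels W ∧ ClosedUnderCokernels W ∧ ClosedUnderExtensions W

/-- The wide closure of a subcategory: the smallest wide subcategory containing it. -/
def wideClosure (N : Set 𝒜) : Set 𝒜 :=
  {X | ∀ W : Set 𝒜, IsWide W → N ⊆ W → X ∈ W}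

variable [HasExt.{w} 𝒜]

/-- An abelian category is hereditary if `Ext²(A, B) = 0` for all objects `A`, `B`
(equivalently, it has global dimension at most one). -/
def Hereditary : Prop := ∀ ⦃X Y : 𝒜⦄ (e : Abelian.Ext X Y 2), e = 0

section Extensions

variable {C : Type u} [Category.{v} C] [Abelian C]

open DerivedCategory Pretriangulated in
/-- A short complex whose image in the derived category is part of a distinguished triangle
is short exact. -/
theorem shortExact_of_singleFunctor_distinguished [HasDerivedCategory.{w} C] {S : ShortComplex C}
    (x : (singleFunctor C 0).obj S.X₃ ⟶ ((singleFunctor C 0).obj S.X₁)⟦(1 : ℤ)⟧)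
    (hT : Triangle.mk ((singleFunctor C 0).map S.f) ((singleFunctor C 0).map S.g) x ∈
      distTriang (DerivedCategory C)) : S.ShortExact := by
  let e := singleFunctorCompHomologyFunctorIso C 0
  have hmono : Mono ((singleFunctor C 0 ⋙ homologyFunctor C 0).map S.f) :=
    (HomologySequence.mono_homologyMap_mor₁_iff _ hT (-1) 0).2
      ((isZero_of_isGE ((singleFunctor C 0).obj S.X₃) 0 (-1) (by lia)).eq_of_src _ _)
  have hepi : Epi ((singleFunctor C 0 ⋙ homologyFunctor C 0).map S.g) :=
    (HomologySequence.epi_homologyMap_mor₂_iff _ hT 0 1).2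
      ((isZero_of_isLE ((singleFunctor C 0).obj S.X₁) 0 1 (by lia)).eq_of_tgt _ _)
  have hex := HomologySequence.exact₂ _ hT 0
  have hf : Mono S.f := by
    have h : S.f = e.inv.app _ ≫ (singleFunctor C 0 ⋙ homologyFunctor C 0).map S.f ≫
      e.hom.app _ := (NatIso.naturality_1 e S.f).symm
    rw [h]
    infer_instance
  have hg : Epi S.g := by
    have h : S.g = e.inv.app _ ≫ (singleFunctor C 0 ⋙ homologyFunctor C 0).map S.g ≫
      e.hom.app _ := (NatIso.naturality_1 e S.g).symm
    rw [h]
    infer_instance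
  refine ⟨ShortComplex.exact_of_iso (ShortComplex.isoMk (e.app _) (e.app _) (e.app _) ?_ ?_) hex⟩
  · exact (e.hom.naturality S.f).symm
  · exact (e.hom.naturality S.g).symm

open DerivedCategory Pretriangulated in
/-- Every class in `Ext¹` is the class of a short exact sequence. -/
theorem exists_shortExact_extClass_eq [HasExt.{w} C] {X Y : C} (x : Abelian.Ext X Y 1) :
    ∃ (E : C) (f : Y ⟶ E) (g : E ⟶ X) (zero : f ≫ g = 0)
      (h : (ShortComplex.mk f g zero).ShortExact), h.extClass = x := by
  let := HasDerivedCategory.standard C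
  obtain ⟨Z, f', g', hT⟩ := distinguished_cocone_triangle₂ (C := DerivedCategory C) x.hom
  have hGE : Z.IsGE 0 := TStructure.t.isGE₂ _ hT 0
    (inferInstanceAs (((singleFunctor C 0).obj Y).IsGE 0))
    (inferInstanceAs (((singleFunctor C 0).obj X).IsGE 0))
  have hLE : Z.IsLE 0 := TStructure.t.isLE₂ _ hT 0
    (inferInstanceAs (((singleFunctor C 0).obj Y).IsLE 0))
    (inferInstanceAs (((singleFunctor C 0).obj X).IsLE 0))
  obtain ⟨E, ⟨i⟩⟩ := exists_iso_singleFunctor_obj_of_isGE_of_isLE Z 0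
  obtain ⟨f, hf⟩ := (singleFunctor C 0).map_surjective (f' ≫ i.hom)
  obtain ⟨g, hg⟩ := (singleFunctor C 0).map_surjective (i.inv ≫ g')
  have hT' : Triangle.mk ((singleFunctor C 0).map f) ((singleFunctor C 0).map g) x.hom ∈
      distTriang (DerivedCategory C) :=
    isomorphic_distinguished _ hT _ (Triangle.isoMk _ _ (Iso.refl _) i.symm (Iso.refl _)
      (((Iso.comp_inv_eq i).2 hf).trans (Category.id_comp f').symm)
      ((Category.comp_id _).trans hg)
      ((whisker_eq x.hom (CategoryTheory.Functor.map_id _ _)).trans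
        ((Category.comp_id _).trans (Category.id_comp x.hom).symm)))
  have zero : f ≫ g = 0 := (singleFunctor C 0).map_injective (by
    rw [Functor.map_comp, Functor.map_zero]
    exact comp_distTriang_mor_zero₁₂ _ hT')
  have h : (ShortComplex.mk f g zero).ShortExact :=
    shortExact_of_singleFunctor_distinguished x.hom hT'
  refine ⟨E, f, g, zero, h, ?_⟩
  have := h.epi_g
  obtain ⟨c, hc₁, hc₂⟩ := complete_distinguished_triangle_morphism _ _
    h.singleTriangle_distinguished hT' (𝟙 _) (𝟙 _)
    ((Category.comp_id _).trans (Category.id_comp ((singleFunctor C 0).map f)).symm)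
  obtain ⟨c, rfl⟩ := (singleFunctor C 0).map_surjective c
  have hgc : g ≫ c = g := (singleFunctor C 0).map_injective (by
    rw [Functor.map_comp]
    exact hc₁.trans (Category.id_comp _))
  obtain rfl : c = 𝟙 X := by rw [← cancel_epi g, hgc, Category.comp_id]
  ext
  rw [h.extClass_hom]
  calc h.singleδ = h.singleδ ≫ (𝟙 ((singleFunctor C 0).obj Y))⟦(1 : ℤ)⟧' := by simp
    _ = (singleFunctor C 0).map (𝟙 X) ≫ x.hom := hc₂
    _ = x.hom := by simp

open DerivedCategory Pretriangulated in
/-- Morphisms between the outer terms of short exact sequences that are compatible with the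
extension classes extend to a morphism of short exact sequences. -/
theorem exists_hom_of_extClass_comp_eq [HasExt.{w} C] {S S' : ShortComplex C}
    (hS : S.ShortExact) (hS' : S'.ShortExact) (a : S.X₁ ⟶ S'.X₁) (c : S.X₃ ⟶ S'.X₃)
    (hac : hS.extClass.comp (Abelian.Ext.mk₀ a) (add_zero 1) =
      (Abelian.Ext.mk₀ c).comp hS'.extClass (zero_add 1)) :
    ∃ φ : S ⟶ S', φ.τ₁ = a ∧ φ.τ₃ = c := by
  let := HasDerivedCategory.standard C
  have hδ : hS.singleδ ≫ ((singleFunctor C 0).map a)⟦(1 : ℤ)⟧' =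
      (singleFunctor C 0).map c ≫ hS'.singleδ := by
    simpa [ShiftedHom.comp_mk₀, ShiftedHom.mk₀_comp] using!
      congr_arg Abelian.Ext.hom hac
  obtain ⟨b, hb₁, hb₂⟩ := complete_distinguished_triangle_morphism₂ _ _
    hS.singleTriangle_distinguished hS'.singleTriangle_distinguished
    ((singleFunctor C 0).map a) ((singleFunctor C 0).map c) hδ
  obtain ⟨b, rfl⟩ := (singleFunctor C 0).map_surjective b
  exact ⟨{ τ₁ := a, τ₂ := b, τ₃ := c
           comm₁₂ := (singleFunctor C 0).map_injective (by
             rw [Functor.map_comp, Functor.map_comp]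
             exact hb₁.symm)
           comm₂₃ := (singleFunctor C 0).map_injective (by
             rw [Functor.map_comp, Functor.map_comp]
             exact hb₂.symm) }, rfl, rfl⟩

/-- The cobase change of a short exact sequence is short exact. -/
theorem shortExact_of_isPushout {S : ShortComplex C} (hS : S.ShortExact) {N P : C}
    {a : S.X₁ ⟶ N} {r : S.X₂ ⟶ P} {b : N ⟶ P} (sq : IsPushout S.f a r b) :
    ∃ (g : P ⟶ S.X₃) (zero : b ≫ g = 0), r ≫ g = S.g ∧ (ShortComplex.mk b g zero).ShortExact := by
  have := hS.mono_f
  have := hS.epi_g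
  have hw : S.f ≫ S.g = a ≫ 0 := by simp
  have hr : r ≫ sq.desc S.g 0 hw = S.g := sq.inl_desc _ _ _
  have hb : b ≫ sq.desc S.g 0 hw = 0 := sq.inr_desc _ _ _
  have : Mono b := MorphismProperty.of_isPushout (P := .monomorphisms C) sq.flip ‹Mono S.f›
  have : Epi (r ≫ sq.desc S.g 0 hw) := by rwa [hr]
  have : Epi (sq.desc S.g 0 hw) := epi_of_epi r _
  refine ⟨_, hb, hr, { exact := ?_ }⟩
  rw [ShortComplex.exact_iff_exact_up_to_refinements]
  intro T x hx
  obtain ⟨T', π, hπ, x₂, x₃, h⟩ := sq.hom_eq_add_up_to_refinements x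
  have hx₂ : x₂ ≫ S.g = 0 := by
    have := π ≫= hx
    dsimp at this
    rw [reassoc_of% h, Preadditive.add_comp] at this
    simpa [hr, hb] using this
  refine ⟨T', π, hπ, hS.exact.lift x₂ hx₂ ≫ a + x₃, ?_⟩
  have hl := hS.exact.lift_f x₂ hx₂
  simp [h, ← sq.w, reassoc_of% hl]

/-- Kernels are unchanged by cobase change along a monomorphism. -/
theorem exists_lift_of_isPushout {S : ShortComplex C} (hS : S.ShortExact) {N P : C}
    {a : S.X₁ ⟶ N} {r : S.X₂ ⟶ P} {b : N ⟶ P} (sq : IsPushout S.f a r b) {T : C}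
    (x : T ⟶ S.X₂) (hx : x ≫ r = 0) : ∃ y : T ⟶ S.X₁, y ≫ S.f = x ∧ y ≫ a = 0 := by
  have := hS.mono_f
  obtain ⟨g, zero, hr, hP⟩ := shortExact_of_isPushout hS sq
  have : Mono b := hP.mono_f
  have hxg : x ≫ S.g = 0 := by rw [← hr, reassoc_of% hx, zero_comp]
  refine ⟨hS.exact.lift x hxg, hS.exact.lift_f x hxg, ?_⟩
  have hl := hS.exact.lift_f x hxg
  rw [← cancel_mono b, Category.assoc, ← sq.w, reassoc_of% hl, hx, zero_comp]

/-- A morphism of short exact sequences which is an isomorphism on the quotients gives a short exact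
sequence `0 ⟶ X₁ ⟶ X₂ ⊞ X₁' ⟶ X₂' ⟶ 0`. -/
theorem shortExact_biprod_of_isIso_τ₃ {S S' : ShortComplex C} (hS : S.ShortExact)
    (hS' : S'.ShortExact) (φ : S ⟶ S') [IsIso φ.τ₃] :
    (ShortComplex.mk (biprod.lift S.f (-φ.τ₁)) (biprod.desc φ.τ₂ S'.f)
      (by simp [φ.comm₁₂])).ShortExact := by
  have := hS.mono_f
  have := hS.epi_g
  have := hS'.mono_f
  have : Mono (biprod.lift S.f (-φ.τ₁) ≫ biprod.fst) := by simpa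
  have : Mono (biprod.lift S.f (-φ.τ₁)) := mono_of_mono _ biprod.fst
  have : Epi (biprod.desc φ.τ₂ S'.f) := by
    rw [epi_iff_surjective_up_to_refinements]
    intro T x
    obtain ⟨T₁, π₁, _, y, hy⟩ := surjective_up_to_refinements_of_epi S.g (x ≫ S'.g ≫ inv φ.τ₃)
    have hz : (π₁ ≫ x - y ≫ φ.τ₂) ≫ S'.g = 0 := by
      have := hy =≫ φ.τ₃
      simp only [Category.assoc, IsIso.inv_hom_id, Category.comp_id] at this
      simp [this, φ.comm₂₃]
    exact ⟨T₁, π₁, inferInstance, biprod.lift y (hS'.exact.lift _ hz), by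
      simp [hS'.exact.lift_f _ hz]⟩
  refine { exact := ?_ }
  rw [ShortComplex.exact_iff_exact_up_to_refinements]
  intro T x hx
  have hx' : x ≫ biprod.fst ≫ φ.τ₂ + x ≫ biprod.snd ≫ S'.f = 0 := by
    simpa [biprod.desc_eq] using hx
  have hz : (x ≫ biprod.fst) ≫ S.g = 0 := by
    have := hx' =≫ S'.g
    rw [← cancel_mono φ.τ₃]
    simpa [φ.comm₂₃] using this
  have hl := hS.exact.lift_f _ hz
  refine ⟨T, 𝟙 T, inferInstance, hS.exact.lift _ hz, ?_⟩
  dsimp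
  rw [Category.id_comp]
  apply biprod.hom_ext
  · simp [hl]
  · rw [← cancel_mono S'.f]
    simp [φ.comm₁₂, reassoc_of% hl, eq_neg_of_add_eq_zero_right hx']

/-- A morphism of short exact sequences which is an isomorphism on the subobjects and a
monomorphism on the quotients has the same cokernel in the middle as on the quotients. -/
theorem shortExact_τ₂_of_isIso_τ₁ {S S' : ShortComplex C} (hS : S.ShortExact)
    (hS' : S'.ShortExact) (φ : S ⟶ S') [IsIso φ.τ₁] {Q : C} {c : S.X₃ ⟶ S'.X₃}
    (hc : φ.τ₃ = c) {q : S'.X₃ ⟶ Q} {zero : c ≫ q = 0}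
    (hq : (ShortComplex.mk c q zero).ShortExact) :
    (ShortComplex.mk φ.τ₂ (S'.g ≫ q) (by simp [φ.comm₂₃_assoc, hc, zero])).ShortExact := by
  subst hc
  have := hS.mono_f
  have := hS.epi_g
  have := hS'.epi_g
  have := hS'.mono_f
  have : Mono φ.τ₃ := hq.mono_f
  have : Epi q := hq.epi_g
  have : Mono φ.τ₂ := ShortComplex.mono_τ₂_of_exact_of_mono φ hS.exact
  have : Epi (S'.g ≫ q) := epi_comp _ _
  refine { exact := ?_ }
  rw [ShortComplex.exact_iff_exact_up_to_refinements]
  intro T x hx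
  dsimp at x hx
  have hxq : (x ≫ S'.g) ≫ q = 0 := by simpa using hx
  obtain ⟨T₁, π₁, _, y, hy⟩ :=
    surjective_up_to_refinements_of_epi S.g (hq.exact.lift (x ≫ S'.g) hxq)
  have hl : hq.exact.lift (x ≫ S'.g) hxq ≫ φ.τ₃ = x ≫ S'.g := hq.exact.lift_f _ hxq
  have hz : (π₁ ≫ x - y ≫ φ.τ₂) ≫ S'.g = 0 := by
    simp [φ.comm₂₃, ← reassoc_of% hy, hl]
  have hl' := hS'.exact.lift_f _ hz
  refine ⟨T₁, π₁, inferInstance, y + hS'.exact.lift _ hz ≫ inv φ.τ₁ ≫ S.f, ?_⟩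
  dsimp
  simp only [Preadditive.add_comp, Category.assoc, ← φ.comm₁₂, IsIso.inv_hom_id_assoc, hl']
  abel

/-- A monomorphism `j : Y ⟶ M` with cokernel `Q` induces a short exact sequence
`0 ⟶ coker h ⟶ coker (h ≫ j) ⟶ Q ⟶ 0`. -/
theorem shortExact_cokernel_comp {X Y M Q : C} (h : X ⟶ Y) {j : Y ⟶ M} {q : M ⟶ Q}
    {zero : j ≫ q = 0} (hj : (ShortComplex.mk j q zero).ShortExact) :
    (ShortComplex.mk (cokernel.map h (h ≫ j) (𝟙 X) j (by simp))
      (cokernel.desc (h ≫ j) q (by simp [zero])) (by ext; simp [zero])).ShortExact := by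
  have : Mono j := hj.mono_f
  have : Epi q := hj.epi_g
  have : Epi (cokernel.π (h ≫ j) ≫ cokernel.desc (h ≫ j) q (by simp [zero])) := by simpa
  have : Epi (cokernel.desc (h ≫ j) q (by simp [zero])) := epi_of_epi (cokernel.π (h ≫ j)) _
  have : Mono (cokernel.map h (h ≫ j) (𝟙 X) j (by simp)) := by
    rw [Preadditive.mono_iff_cancel_zero]
    intro T z hz
    obtain ⟨T₁, π₁, _, y, hy⟩ := surjective_up_to_refinements_of_epi (cokernel.π h) z
    have hex := ShortComplex.exact_cokernel (h ≫ j)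
    obtain ⟨T₂, π₂, _, n, hn⟩ := hex.exact_up_to_refinements (y ≫ j) (by
      have := hy =≫ cokernel.map h (h ≫ j) (𝟙 X) j (by simp)
      simpa [hz] using this.symm)
    have hn' : π₂ ≫ y = n ≫ h := by
      rw [← cancel_mono j]
      simpa using hn
    rw [← cancel_epi π₁, ← cancel_epi π₂, hy, reassoc_of% hn']
    simp
  refine { exact := ?_ }
  rw [ShortComplex.exact_iff_exact_up_to_refinements]
  intro T x hx
  obtain ⟨T₁, π₁, _, m, hm⟩ := surjective_up_to_refinements_of_epi (cokernel.π (h ≫ j)) x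
  have hmq : m ≫ q = 0 := by
    have := hm =≫ cokernel.desc (h ≫ j) q (by simp [zero])
    dsimp at hx
    simpa [hx] using this.symm
  have hl : hj.exact.lift m hmq ≫ j = m := hj.exact.lift_f m hmq
  refine ⟨T₁, π₁, inferInstance, hj.exact.lift m hmq ≫ cokernel.π h, ?_⟩
  simp [hm, reassoc_of% hl]

end Extensions

section NarrowSubcategories

variable {C : Type u} [Category.{v} C] [Abelian C] {N : Set C}

theorem subset_wideClosure (N : Set C) : N ⊆ wideClosure N := fun _ hX _ _ hN ↦ hN hX

theorem isWide_wideClosure (N : Set C) : IsWide (wideClosure N) :=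
  ⟨fun _ _ hX e W hW hN ↦ hW.1 (hX W hW hN) e,
    fun _ _ f hX hY W hW hN ↦ hW.2.1 f (hX W hW hN) (hY W hW hN),
    fun _ _ f hX hY W hW hN ↦ hW.2.2.1 f (hX W hW hN) (hY W hW hN),
    fun S hS h₁ h₃ W hW hN ↦ hW.2.2.2 S hS (h₁ W hW hN) (h₃ W hW hN)⟩

/-- The objects which are kernels of epimorphisms between objects of `N`. -/
def kernelsOfEpis (N : Set C) : Set C :=
  {X | ∃ (M Q : C) (i : X ⟶ M) (q : M ⟶ Q) (zero : i ≫ q = 0),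
    M ∈ N ∧ Q ∈ N ∧ (ShortComplex.mk i q zero).ShortExact}

theorem replete_kernelsOfEpis (N : Set C) : Replete (kernelsOfEpis N) := by
  rintro X Y ⟨M, Q, i, q, zero, hM, hQ, h⟩ e
  have zero' : (e.inv ≫ i) ≫ q = 0 := by simp [zero]
  let α : ShortComplex.mk i q zero ≅ ShortComplex.mk (e.inv ≫ i) q zero' :=
    ShortComplex.isoMk e (Iso.refl _) (Iso.refl _)
  exact ⟨M, Q, e.inv ≫ i, q, zero', hM, hQ, ShortComplex.shortExact_of_iso α h⟩

theorem IsNarrow.subset_kernelsOfEpis (hN : IsNarrow N) : N ⊆ kernelsOfEpis N := by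
  intro X hX
  refine ⟨X, cokernel (𝟙 X), 𝟙 X, cokernel.π _, cokernel.condition _, hX, hN.2.2 _ hX hX,
    { exact := ShortComplex.exact_cokernel (𝟙 X), mono_f := ?_, epi_g := ?_ }⟩ <;>
  · dsimp
    infer_instance

theorem IsNarrow.kernelsOfEpis_of_shortExact (hN : IsNarrow N) {X E Q : C} {i : X ⟶ E}
    {q : E ⟶ Q} {zero : i ≫ q = 0} (h : (ShortComplex.mk i q zero).ShortExact)
    (hE : E ∈ kernelsOfEpis N) (hQ : Q ∈ N) : X ∈ kernelsOfEpis N := by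
  obtain ⟨M, M₁, j, p, zero', hM, hM₁, hj⟩ := hE
  have sq := IsPushout.of_hasPushout j q
  obtain ⟨g, zero'', -, hP⟩ := shortExact_of_isPushout hj sq
  have : Mono i := h.mono_f
  have : Mono j := hj.mono_f
  have : Epi q := h.epi_g
  have hw : (i ≫ j) ≫ pushout.inl j q = 0 := by
    rw [Category.assoc, sq.w, reassoc_of% zero, zero_comp]
  refine ⟨M, pushout j q, i ≫ j, pushout.inl j q, hw, hM, hN.2.1 _ hP hQ hM₁,
    { exact := ?_, mono_f := mono_comp _ _, epi_g := inferInstanceAs (Epi (pushout.inl j q)) }⟩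
  rw [ShortComplex.exact_iff_exact_up_to_refinements]
  intro T x hx
  obtain ⟨y, hy, hyq⟩ := exists_lift_of_isPushout hj sq x hx
  refine ⟨T, 𝟙 T, inferInstance, h.exact.lift y hyq, ?_⟩
  have hl : h.exact.lift y hyq ≫ i = y := h.exact.lift_f y hyq
  dsimp at hy ⊢
  rw [Category.id_comp, reassoc_of% hl, hy]

theorem IsNarrow.closedUnderCokernels_kernelsOfEpis (hN : IsNarrow N)
    (hext : ClosedUnderExtensions (kernelsOfEpis N)) :
    ClosedUnderCokernels (kernelsOfEpis N) := by
  rintro X Y f ⟨M, M₁, i, p, zero, hM, hM₁, hi⟩ hY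
  have sq := IsPushout.of_hasPushout i f
  obtain ⟨g, zero', -, hP⟩ := shortExact_of_isPushout hi sq
  obtain ⟨L, L₁, j, q, zero'', hL, hL₁, hj⟩ := hext _ hP hY (hN.subset_kernelsOfEpis hM₁)
  have := isIso_cokernel_map_of_isPushout sq.flip
  exact replete_kernelsOfEpis N ⟨_, _, _, _, _, hN.2.2 _ hM hL, hL₁,
    shortExact_cokernel_comp (pushout.inl i f) hj⟩
    (asIso (cokernel.map f (pushout.inl i f) i (pushout.inr i f) sq.flip.w)).symm

variable [HasExt.{w} C]

theorem IsNarrow.image_mem (hher : Hereditary (𝒜 := C)) (hN : IsNarrow N) {X Y : C} (f : X ⟶ Y)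
    (hX : X ∈ N) (hY : Y ∈ N) : Abelian.image f ∈ N := by
  have hp : (ShortComplex.mk (kernel.ι (Abelian.factorThruImage f)) (Abelian.factorThruImage f)
      (kernel.condition _)).ShortExact :=
    { exact := ShortComplex.exact_kernel _
      mono_f := inferInstanceAs (Mono (kernel.ι _))
      epi_g := inferInstanceAs (Epi (Abelian.factorThruImage f)) }
  have hι : (ShortComplex.mk (Abelian.image.ι f) (cokernel.π f) (kernel.condition _)).ShortExact :=
    { exact := ShortComplex.exact_kernel _
      mono_f := inferInstanceAs (Mono (kernel.ι _))
      epi_g := inferInstanceAs (Epi (cokernel.π f)) }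
  obtain ⟨η, hη⟩ := Abelian.Ext.covariant_sequence_exact₃ _ hp hι.extClass rfl (hher _)
  obtain ⟨E, a, b, zero, hE, rfl⟩ := exists_shortExact_extClass_eq η
  obtain ⟨φ, hφ₁, hφ₃⟩ := exists_hom_of_extClass_comp_eq hE hι (Abelian.factorThruImage f) (𝟙 _)
    (hη.trans (by simp))
  have : IsIso φ.τ₃ := by rw [hφ₃]; infer_instance
  have hEN : E ∈ N := hN.2.1 _ hE hX (hN.2.2 f hX hY)
  exact hN.1 (hN.2.2 biprod.inl hEN
    (hN.2.1 _ (shortExact_biprod_of_isIso_τ₃ hE hι φ) hX hY)) cokernelBiprodInlIso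

theorem IsNarrow.closedUnderKernels_kernelsOfEpis (hher : Hereditary (𝒜 := C))
    (hN : IsNarrow N) : ClosedUnderKernels (kernelsOfEpis N) := by
  rintro X Y f ⟨M, M₁, i, p, zero, hM, hM₁, hi⟩ ⟨L, L₁, j, q, zero', hL, hL₁, hj⟩
  have sq := IsPushout.of_hasPushout i (f ≫ j)
  obtain ⟨g, zero'', -, hP⟩ := shortExact_of_isPushout hi sq
  have : Mono i := hi.mono_f
  have : Mono j := hj.mono_f
  let r := pushout.inl i (f ≫ j)
  have hw : (kernel.ι f ≫ i) ≫ Abelian.factorThruImage r = 0 := by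
    rw [← cancel_mono (Abelian.image.ι r)]
    simp [r, sq.w]
  refine ⟨M, Abelian.image r, kernel.ι f ≫ i, Abelian.factorThruImage r, hw, hM,
    hN.image_mem hher r hM (hN.2.1 _ hP hL hM₁),
    { exact := ?_, mono_f := mono_comp _ _,
      epi_g := inferInstanceAs (Epi (Abelian.factorThruImage r)) }⟩
  rw [ShortComplex.exact_iff_exact_up_to_refinements]
  intro T x hx
  have hxr : x ≫ r = 0 := by
    have := hx =≫ Abelian.image.ι r
    simpa using this
  obtain ⟨y, hy, hyf⟩ := exists_lift_of_isPushout hi sq x hxr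
  refine ⟨T, 𝟙 T, inferInstance, kernel.lift f y ?_, ?_⟩
  · rw [← cancel_mono j]
    simpa using hyf
  · simpa using hy.symm

theorem IsNarrow.closedUnderExtensions_kernelsOfEpis (hher : Hereditary (𝒜 := C))
    (hN : IsNarrow N) : ClosedUnderExtensions (kernelsOfEpis N) := by
  rintro S hS ⟨M, M₁, i, p, zero, hM, hM₁, hi⟩ ⟨L, L₁, j, q, zero', hL, hL₁, hj⟩
  have sq := IsPushout.of_hasPushout S.f i
  obtain ⟨g, zero₁, -, hP⟩ := shortExact_of_isPushout hS sq
  obtain ⟨g', zero₂, -, hP'⟩ := shortExact_of_isPushout hi sq.flip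
  obtain ⟨η, hη⟩ := Abelian.Ext.contravariant_sequence_exact₁ hj _ hP.extClass rfl (hher _)
  obtain ⟨E, a, b, zero₃, hE, rfl⟩ := exists_shortExact_extClass_eq η
  obtain ⟨φ, hφ₁, hφ₃⟩ := exists_hom_of_extClass_comp_eq hP hE (𝟙 _) j
    (Eq.trans (by simp) hη.symm)
  have : IsIso φ.τ₁ := by rw [hφ₁]; infer_instance
  exact hN.kernelsOfEpis_of_shortExact hP' ⟨E, L₁, _, _, _, hN.2.1 _ hE hM hL, hL₁,
    shortExact_τ₂_of_isIso_τ₁ hP hE φ hφ₃ hj⟩ hM₁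

theorem IsNarrow.isWide_kernelsOfEpis (hher : Hereditary (𝒜 := C)) (hN : IsNarrow N) :
    IsWide (kernelsOfEpis N) :=
  have hext := hN.closedUnderExtensions_kernelsOfEpis hher
  ⟨replete_kernelsOfEpis N, hN.closedUnderKernels_kernelsOfEpis hher,
    hN.closedUnderCokernels_kernelsOfEpis hext, hext⟩

/-- Every object of the wide closure of a narrow subcategory embeds into one of its objects. -/
theorem IsNarrow.exists_mono_of_mem_wideClosure (hher : Hereditary (𝒜 := C)) (hN : IsNarrow N)
    {X : C} (hX : X ∈ wideClosure N) : ∃ M ∈ N, ∃ f : X ⟶ M, Mono f := by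
  obtain ⟨M, Q, i, q, zero, hM, hQ, h⟩ :=
    hX _ (hN.isWide_kernelsOfEpis hher) hN.subset_kernelsOfEpis
  exact ⟨M, hM, i, h.mono_f⟩

end NarrowSubcategories

theorem narrow_iff_tilting_nullity_class_in_wideClosure
    (hher : Hereditary (𝒜 := 𝒜)) (𝒩 : Set 𝒜) (hrep : Replete 𝒩) :
    (ClosedUnderExtensions 𝒩 ∧ ClosedUnderCokernels 𝒩) ↔
      ((∀ ⦃X Y : 𝒜⦄ (f : X ⟶ Y), Epi f → X ∈ 𝒩 → Y ∈ wideClosure 𝒩 → Y ∈ 𝒩) ∧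
       (∀ S : ShortComplex 𝒜, S.ShortExact → S.X₁ ∈ 𝒩 → S.X₃ ∈ 𝒩 →
          S.X₂ ∈ wideClosure 𝒩 → S.X₂ ∈ 𝒩) ∧
       (∀ W ∈ wideClosure 𝒩, ∃ X ∈ 𝒩, ∃ f : W ⟶ X, Mono f)) := by
  constructor
  · intro h
    have hN : IsNarrow 𝒩 := ⟨hrep, h⟩
    refine ⟨?_, fun S hS h₁ h₃ _ ↦ h.1 S hS h₁ h₃,
      fun W hW ↦ hN.exists_mono_of_mem_wideClosure hher hW⟩
    intro X Y f _ hX hY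
    obtain ⟨M, hM, j, _⟩ := hN.exists_mono_of_mem_wideClosure hher hY
    have hf : f ≫ j ≫ cokernel.π (f ≫ j) = 0 := by
      rw [← Category.assoc, cokernel.condition]
    have hj : j ≫ cokernel.π (f ≫ j) = 0 := by rw [← cancel_epi f, hf, comp_zero]
    let u : Y ⟶ Abelian.image (f ≫ j) := kernel.lift _ j hj
    have hu : u ≫ Abelian.image.ι (f ≫ j) = j := kernel.lift_ι _ _ _
    have hfu : f ≫ u = Abelian.factorThruImage (f ≫ j) := by
      rw [← cancel_mono (Abelian.image.ι (f ≫ j)), Category.assoc, hu, Abelian.image.fac]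
    have : Mono (u ≫ Abelian.image.ι (f ≫ j)) := by rwa [hu]
    have : Epi (f ≫ u) := by rw [hfu]; infer_instance
    have : Mono u := mono_of_mono u (Abelian.image.ι (f ≫ j))
    have : Epi u := epi_of_epi f u
    have : IsIso u := isIso_of_mono_of_epi u
    exact hrep (hN.image_mem hher (f ≫ j) hX hM) (asIso u).symm
  · rintro ⟨hquot, hext, -⟩
    have hsub := subset_wideClosure 𝒩
    obtain ⟨-, -, hcok, hext'⟩ := isWide_wideClosure 𝒩
    exact ⟨fun S hS h₁ h₃ ↦ hext S hS h₁ h₃ (hext' S hS (hsub h₁) (hsub h₃)),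
      fun X Y f hX hY ↦ hquot (cokernel.π f) inferInstance hY (hcok f (hsub hX) (hsub hY))⟩
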